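/- Let b_1,…,b_N be i.i.d. N(0, (1/N) I_{n−1}) Gaussian vectors and v ∈ ℝ^N a fixed vector. There is a universal constant C > 0 such that for any δ ∈ (0,1), with probability at least 1−δ, |Σ_{i=1}^N (‖b_i‖² − (n−1)/N) v_i²| ≤ C( (√(n·log(1/δ))/N)·‖v‖₄² + (√n·log(1/δ)/N)·‖v‖_∞² ). -/

import Mathlib

open MeasureTheory ProbabilityTheory Matrix

/-- ℓ_p norm of a vector in `ℝ^k`. -/
noncomputable def lpNorm {k : ℕ} (p : ℝ) (v : Fin k → ℝ) : ℝ := (∑ i, |v i| ^ p) ^ (1 / p)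

/-- Supremum (ℓ_∞) norm of a vector in `ℝ^k`. -/
noncomputable def supNorm {k : ℕ} (v : Fin k → ℝ) : ℝ := ⨆ i, |v i|

/-- The Gaussian measure `N(0, σ2 · I_k)` on `ℝ^k`. -/
noncomputable def gaussVec (k : ℕ) (σ2 : NNReal) : Measure (Fin k → ℝ) :=
  Measure.pi fun _ => gaussianReal 0 σ2

instance (k : ℕ) (σ2 : NNReal) : IsProbabilityMeasure (gaussVec k σ2) := by
  unfold gaussVec; infer_instance

/-- The law of `N` i.i.d. samples from `N(0, σ2 · I_k)`. -/
noncomputable def iidGaussVec (N k : ℕ) (σ2 : NNReal) : Measure (Fin N → Fin k → ℝ) :=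
  Measure.pi fun _ => gaussVec k σ2

lemma integrable_exp_mul_sq_gaussianReal {a : ℝ} (ha : a < 1 / 2) :
    Integrable (fun x : ℝ => Real.exp (a * x ^ 2)) (gaussianReal 0 1) := by
  rw [gaussianReal_of_var_ne_zero _ one_ne_zero, integrable_withDensity_iff_integrable_smul'
    (measurable_gaussianPDF _ _) (Filter.Eventually.of_forall fun _ => gaussianPDF_lt_top)]
  have h := (integrable_exp_neg_mul_sq (b := 1 / 2 - a) (by linarith)).const_mul
    (Real.sqrt (2 * Real.pi))⁻¹
  refine h.congr (Filter.Eventually.of_forall fun x => ?_)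
  simp only [toReal_gaussianPDF, gaussianPDFReal, NNReal.coe_one, mul_one, sub_zero, smul_eq_mul]
  rw [mul_assoc, ← Real.exp_add]
  ring_nf

lemma integral_exp_mul_sq_gaussianReal {a : ℝ} (ha : a < 1 / 2) :
    ∫ x, Real.exp (a * x ^ 2) ∂(gaussianReal 0 1) = (Real.sqrt (1 - 2 * a))⁻¹ := by
  rw [integral_gaussianReal_eq_integral_smul one_ne_zero]
  have h : ∀ x : ℝ, gaussianPDFReal 0 1 x • Real.exp (a * x ^ 2)
      = (Real.sqrt (2 * Real.pi))⁻¹ * Real.exp (-(1 / 2 - a) * x ^ 2) := by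
    intro x
    simp only [gaussianPDFReal, NNReal.coe_one, mul_one, sub_zero, smul_eq_mul]
    rw [mul_assoc, ← Real.exp_add]
    ring_nf
  simp_rw [h]
  rw [integral_const_mul, integral_gaussian, ← Real.sqrt_inv, ← Real.sqrt_mul (by positivity),
    ← Real.sqrt_inv]
  congr 1
  have : 1 - 2 * a ≠ 0 := by linarith
  have : 1 / 2 - a ≠ 0 := by linarith
  field_simp

lemma exp_neg_sub_sq_le {u : ℝ} (hu : |u| ≤ 1 / 2) : Real.exp (-u - u ^ 2) ≤ 1 - u := by
  obtain ⟨h1, h2⟩ := abs_le.1 hu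
  have h3 : Real.exp (-u - u ^ 2) * Real.exp (u + u ^ 2) = 1 := by
    rw [← Real.exp_add]; simp
  rcases le_total 0 u with hu0 | hu0
  · have h4 := Real.quadratic_le_exp_of_nonneg (x := u + u ^ 2) (by positivity)
    have h5 : 1 ≤ (1 - u) * (1 + (u + u ^ 2) + (u + u ^ 2) ^ 2 / 2) := by
      have h6 : 0 ≤ (1 - u) * (1 + u) ^ 2 / 2 - u := by
        nlinarith [mul_nonneg hu0 (sub_nonneg.2 h2), mul_nonneg hu0 (mul_nonneg hu0 (sub_nonneg.2 h2))]
      nlinarith [mul_nonneg (sq_nonneg u) h6]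
    refine le_of_mul_le_mul_right ?_ (Real.exp_pos (u + u ^ 2))
    rw [h3]
    exact h5.trans (by gcongr; linarith)
  · have h4 := Real.add_one_le_exp (u + u ^ 2)
    refine le_of_mul_le_mul_right ?_ (Real.exp_pos (u + u ^ 2))
    rw [h3]
    have h5 : (1 - u) * (u + u ^ 2 + 1) ≤ (1 - u) * Real.exp (u + u ^ 2) := by gcongr; linarith
    nlinarith [mul_nonneg (neg_nonneg.2 hu0) (sq_nonneg u)]

lemma integral_exp_mul_sq_sub_one_le {a : ℝ} (ha : |a| ≤ 1 / 4) :
    ∫ x, Real.exp (a * (x ^ 2 - 1)) ∂(gaussianReal 0 1) ≤ Real.exp (2 * a ^ 2) := by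
  have ha' := (abs_le.1 ha).2
  have h : ∀ x : ℝ, Real.exp (a * (x ^ 2 - 1)) = Real.exp (-a) * Real.exp (a * x ^ 2) := by
    intro x; rw [← Real.exp_add]; ring_nf
  simp_rw [h]
  rw [integral_const_mul, integral_exp_mul_sq_gaussianReal (by linarith),
    ← div_eq_mul_inv, div_le_iff₀ (Real.sqrt_pos.2 (by linarith))]
  have h1 : Real.exp (-a - 2 * a ^ 2) ≤ Real.sqrt (1 - 2 * a) := by
    apply Real.le_sqrt_of_sq_le
    rw [← Real.exp_nat_mul]
    refine le_trans (le_of_eq ?_) (exp_neg_sub_sq_le (u := 2 * a) (by rw [abs_mul, abs_two]; linarith))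
    push_cast; ring_nf
  calc Real.exp (-a) = Real.exp (2 * a ^ 2) * Real.exp (-a - 2 * a ^ 2) := by
        rw [← Real.exp_add]; ring_nf
    _ ≤ _ := by gcongr

lemma integral_sq_gaussianReal : ∫ x, x ^ 2 ∂(gaussianReal 0 1) = 1 := by
  have h := variance_fun_id_gaussianReal (μ := 0) (v := 1)
  rw [variance_eq_integral measurable_id'.aemeasurable] at h
  simpa using h

lemma integral_pow_four_gaussianReal : ∫ x, x ^ 4 ∂(gaussianReal 0 1) = 3 := by
  have h : iteratedDeriv 4 (mgf (fun x ↦ x) (gaussianReal 0 1)) 0 = ∫ x, x ^ 4 ∂(gaussianReal 0 1) := by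
    rw [iteratedDeriv_mgf_zero] <;> simp
  rw [← h, mgf_fun_id_gaussianReal]
  have key : ∀ (P Q : ℝ → ℝ), (∀ t, HasDerivAt P (Q t - t * P t) t) →
      deriv (fun t => P t * Real.exp (t ^ 2 / 2)) = fun t => Q t * Real.exp (t ^ 2 / 2) := by
    intro P Q hP
    ext t
    have h2 : HasDerivAt (fun t : ℝ => Real.exp (t ^ 2 / 2)) (Real.exp (t ^ 2 / 2) * t) t := by
      have := (((hasDerivAt_id t).pow 2).div_const 2).exp
      refine this.congr_deriv ?_
      simp
    refine ((hP t).mul h2).deriv.trans ?_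
    ring
  have e0 : (fun t : ℝ => Real.exp (0 * t + ((1 : NNReal) : ℝ) * t ^ 2 / 2))
      = fun t => (fun _ => 1 : ℝ → ℝ) t * Real.exp (t ^ 2 / 2) := by
    ext t; simp
  rw [e0, iteratedDeriv_succ, iteratedDeriv_succ, iteratedDeriv_succ, iteratedDeriv_one,
    key (fun _ => 1) (fun t => t), key (fun t => t) (fun t => t ^ 2 + 1),
    key (fun t => t ^ 2 + 1) (fun t => t ^ 3 + 3 * t),
    key (fun t => t ^ 3 + 3 * t) (fun t => t ^ 4 + 6 * t ^ 2 + 3)]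
  · simp
  · intro t
    refine (((hasDerivAt_id t).pow 3).add ((hasDerivAt_id t).const_mul 3)).congr_deriv ?_
    simp; ring
  · intro t
    refine (((hasDerivAt_id t).pow 2).add_const 1).congr_deriv ?_
    simp; ring
  · intro t
    refine (hasDerivAt_id t).congr_deriv ?_
    ring
  · intro t
    refine (hasDerivAt_const t 1).congr_deriv ?_
    ring


/-- The weighted sum of centred squares `∑ i, w i * (x i ^ 2 - 1)`. -/
noncomputable def centeredChiSq {ι : Type*} [Fintype ι] (w x : ι → ℝ) : ℝ :=
  ∑ i, w i * (x i ^ 2 - 1)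

/-- The standard Gaussian measure on `ι → ℝ`. -/
noncomputable def stdGaussianPi (ι : Type*) [Fintype ι] : Measure (ι → ℝ) :=
  Measure.pi fun _ => gaussianReal 0 1

section
variable {ι : Type*} [Fintype ι]

instance : IsProbabilityMeasure (stdGaussianPi ι) := by
  unfold stdGaussianPi; infer_instance

instance : IsGaussian (stdGaussianPi ι) := by
  have h : HasGaussianLaw (fun x : ι → ℝ => fun i => x i) (stdGaussianPi ι) := by
    refine iIndepFun.hasGaussianLaw (X := fun i (x : ι → ℝ) => x i) (fun i => ⟨?_⟩) ?_
    · unfold stdGaussianPi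
      rw [(measurePreserving_eval _ i).map_eq]
      infer_instance
    · exact iIndepFun_pi (X := fun _ => id) (fun _ ↦ aemeasurable_id)
  simpa using h.isGaussian_map

lemma integral_id_stdGaussianPi : (stdGaussianPi ι)[id] = 0 := by
  ext i
  have h : Integrable (id : (ι → ℝ) → ι → ℝ) (stdGaussianPi ι) := IsGaussian.integrable_id
  rw [eval_integral (fun i => h.eval i)]
  exact (integral_comp_eval (μ := fun _ : ι => gaussianReal 0 1) (f := fun x : ℝ => x)
    (by fun_prop)).trans integral_id_gaussianReal

lemma measurable_centeredChiSq (w : ι → ℝ) : Measurable (centeredChiSq w) := by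
  unfold centeredChiSq; fun_prop

lemma memLp_sq_sub_one_gaussianReal : MemLp (fun x : ℝ => x ^ 2 - 1) 2 (gaussianReal 0 1) := by
  refine MemLp.sub ?_ (memLp_const 1)
  rw [memLp_two_iff_integrable_sq (by fun_prop)]
  have h := (memLp_id_gaussianReal (μ := 0) (v := 1) 4).integrable_norm_pow (by norm_num)
  refine h.congr (Filter.Eventually.of_forall fun x => ?_)
  simp only [id, Real.norm_eq_abs]
  rw [Even.pow_abs (by decide)]; ring

lemma memLp_centeredChiSq (w : ι → ℝ) : MemLp (centeredChiSq w) 2 (stdGaussianPi ι) := by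
  unfold centeredChiSq
  refine memLp_finsetSum _ fun i _ => MemLp.const_mul ?_ _
  exact memLp_sq_sub_one_gaussianReal.comp_measurePreserving (measurePreserving_eval _ i)

lemma integral_sq_sub_one_gaussianReal : ∫ x, (x ^ 2 - 1) ∂(gaussianReal 0 1) = 0 := by
  rw [integral_sub _ (integrable_const _), integral_sq_gaussianReal]
  · simp
  · have := memLp_sq_sub_one_gaussianReal.integrable (by norm_num) |>.add (integrable_const 1)
    exact this.congr (Filter.Eventually.of_forall fun x => by simp)

lemma variance_sq_sub_one_gaussianReal : Var[fun x => x ^ 2 - 1; gaussianReal 0 1] = 2 := by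
  rw [variance_of_integral_eq_zero (by fun_prop) integral_sq_sub_one_gaussianReal]
  have h4 : Integrable (fun x : ℝ => x ^ 4) (gaussianReal 0 1) := by
    have h := (memLp_id_gaussianReal (μ := 0) (v := 1) 4).integrable_norm_pow (by norm_num)
    refine h.congr (Filter.Eventually.of_forall fun x => ?_)
    simp only [id, Real.norm_eq_abs]
    exact Even.pow_abs (by decide) _
  have h2 : Integrable (fun x : ℝ => 2 * (x ^ 2 - 1)) (gaussianReal 0 1) :=
    (memLp_sq_sub_one_gaussianReal.integrable (by norm_num)).const_mul 2
  have e : ∀ x : ℝ, (x ^ 2 - 1) ^ 2 = x ^ 4 - 2 * (x ^ 2 - 1) - 1 := fun x => by ring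
  simp_rw [e]
  rw [integral_sub (f := fun x : ℝ => x ^ 4 - 2 * (x ^ 2 - 1)) (h4.sub h2) (integrable_const _),
    integral_sub h4 h2,
    integral_pow_four_gaussianReal, integral_const_mul, integral_sq_sub_one_gaussianReal]
  norm_num

lemma integral_centeredChiSq (w : ι → ℝ) : ∫ x, centeredChiSq w x ∂(stdGaussianPi ι) = 0 := by
  unfold centeredChiSq
  rw [integral_finsetSum]
  · refine Finset.sum_eq_zero fun i _ => ?_
    rw [integral_const_mul]
    have := integral_comp_eval (μ := fun _ : ι => gaussianReal 0 1) (i := i)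
      (f := fun x : ℝ => x ^ 2 - 1) (by fun_prop)
    unfold stdGaussianPi
    rw [this, integral_sq_sub_one_gaussianReal, mul_zero]
  · intro i _
    exact ((memLp_sq_sub_one_gaussianReal.comp_measurePreserving
      (measurePreserving_eval _ i)).integrable (by norm_num)).const_mul _

lemma variance_centeredChiSq (w : ι → ℝ) :
    Var[centeredChiSq w; stdGaussianPi ι] = 2 * ∑ i, w i ^ 2 := by
  have h := variance_sum_pi (μ := fun _ : ι => gaussianReal 0 1)
    (X := fun i x => w i * (x ^ 2 - 1)) (fun i => memLp_sq_sub_one_gaussianReal.const_mul _)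
  have e : centeredChiSq w = ∑ i, fun x : ι → ℝ => w i * (x i ^ 2 - 1) := by
    ext x; simp [centeredChiSq]
  rw [e, stdGaussianPi, h, Finset.mul_sum]
  refine Finset.sum_congr rfl fun i _ => ?_
  rw [variance_const_mul, variance_sq_sub_one_gaussianReal]; ring

lemma exp_centeredChiSq (w x : ι → ℝ) :
    Real.exp (centeredChiSq w x) = ∏ i, Real.exp (w i * (x i ^ 2 - 1)) := by
  rw [centeredChiSq, Real.exp_sum]

lemma integrable_exp_centeredChiSq {w : ι → ℝ} (hw : ∀ i, |w i| ≤ 1 / 4) :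
    Integrable (fun x => Real.exp (centeredChiSq w x)) (stdGaussianPi ι) := by
  simp_rw [exp_centeredChiSq]
  refine Integrable.fintype_prod_dep (f := fun i x => Real.exp (w i * (x ^ 2 - 1))) fun i => ?_
  have h := (integrable_exp_mul_sq_gaussianReal (a := w i)
    (by linarith [(abs_le.1 (hw i)).2])).const_mul (Real.exp (-w i))
  refine h.congr (Filter.Eventually.of_forall fun x => ?_)
  simp only
  rw [← Real.exp_add]; ring_nf

lemma integral_exp_centeredChiSq_le {w : ι → ℝ} (hw : ∀ i, |w i| ≤ 1 / 4) :
    ∫ x, Real.exp (centeredChiSq w x) ∂(stdGaussianPi ι) ≤ Real.exp (2 * ∑ i, w i ^ 2) := by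
  simp_rw [exp_centeredChiSq]
  rw [stdGaussianPi, integral_fintype_prod_eq_prod (f := fun i x => Real.exp (w i * (x ^ 2 - 1))),
    Finset.mul_sum, Real.exp_sum]
  exact Finset.prod_le_prod (fun i _ => integral_nonneg fun _ => (Real.exp_pos _).le)
    fun i _ => integral_exp_mul_sq_sub_one_le (hw i)

lemma map_rotation_stdGaussianPi (θ : ℝ) :
    ((stdGaussianPi ι).prod (stdGaussianPi ι)).map
      (fun p => Real.cos θ • p.1 + Real.sin θ • p.2) = stdGaussianPi ι := by
  have h := IsGaussian.map_rotation_eq_self (μ := stdGaussianPi ι) integral_id_stdGaussianPi θ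
  have h2 := congrArg (Measure.map Prod.fst) h
  rw [Measure.map_map measurable_fst (by fun_prop)] at h2
  rw [Measure.map_fst_prod, measure_univ, one_smul] at h2
  exact h2

lemma centeredChiSq_smul (c : ℝ) (w x : ι → ℝ) :
    centeredChiSq (c • w) x = c * centeredChiSq w x := by
  simp [centeredChiSq, Finset.mul_sum, mul_assoc]

lemma pow_four_le_exp_add_exp_neg (z : ℝ) : z ^ 4 ≤ 24 * (Real.exp z + Real.exp (-z)) := by
  have key : ∀ y : ℝ, 0 ≤ y → y ^ 4 ≤ 24 * Real.exp y := by
    intro y hy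
    have h := Real.pow_div_factorial_le_exp y hy 4
    have e : ((Nat.factorial 4 : ℕ) : ℝ) = 24 := by norm_num [Nat.factorial]
    rw [e] at h
    linarith
  rcases le_total 0 z with hz | hz
  · linarith [key z hz, Real.exp_pos (-z)]
  · have h := key (-z) (by linarith)
    have e : (-z) ^ 4 = z ^ 4 := by ring
    linarith [Real.exp_pos z]

lemma add_sq_sub_pow_four_le_indicator (y : ℝ) :
    y + y ^ 2 - y ^ 4 ≤ 2 * Set.indicator (Set.Ioi 0) 1 y := by
  by_cases hy : 0 < y
  · rw [Set.indicator_of_mem (by exact hy)]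
    simp only [Pi.one_apply, mul_one]
    nlinarith [sq_nonneg (y ^ 2 - 1), sq_nonneg (y - 1), sq_nonneg (y ^ 2 - 3 / 4), sq_nonneg (y - 1 / 2)]
  · rw [Set.indicator_of_notMem (by exact hy)]
    push Not at hy
    rcases le_total (-1) y with h1 | h1
    · nlinarith [sq_nonneg (y ^ 2)]
    · nlinarith [sq_nonneg (y ^ 2), mul_nonneg (sq_nonneg y) (show (0:ℝ) ≤ y ^ 2 - 1 by nlinarith)]

lemma le_measureReal_centeredChiSq_pos_of_eq {w : ι → ℝ} (hw : ∑ i, w i ^ 2 = 1 / 16) :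
    1 / 65536 ≤ (stdGaussianPi ι).real {x | 0 < centeredChiSq w x} := by
  have hwi : ∀ i, |w i| ≤ 1 / 4 := fun i => by
    have h := Finset.single_le_sum (f := fun i => w i ^ 2) (fun i _ => sq_nonneg _)
      (Finset.mem_univ i)
    refine abs_le_of_sq_le_sq (h.trans ?_) (by norm_num)
    rw [hw]; norm_num
  have hneg : ∀ x, centeredChiSq (-w) x = -centeredChiSq w x := fun x => by
    simpa using centeredChiSq_smul (-1) w x
  have hnwi : ∀ i, |(-w) i| ≤ 1 / 4 := fun i => by simpa using hwi i
  have hexp : Real.exp (1 / 8) ≤ 2 := by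
    have h := Real.exp_one_lt_d9
    have h2 : Real.exp (1 / 8) ≤ Real.exp (Real.log 2) := by
      gcongr; linarith [Real.log_two_gt_d9]
    rwa [Real.exp_log (by norm_num)] at h2
  have i1 := integrable_exp_centeredChiSq hwi
  have i2 := integrable_exp_centeredChiSq hnwi
  simp_rw [hneg] at i2
  have b1 := integral_exp_centeredChiSq_le hwi
  have b2 := integral_exp_centeredChiSq_le hnwi
  simp_rw [hneg] at b2
  simp only [Pi.neg_apply, neg_sq, hw] at b1 b2
  norm_num at b1 b2
  set S := centeredChiSq w with hS
  have mS : Measurable S := measurable_centeredChiSq w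
  have L1 : Integrable S (stdGaussianPi ι) := (memLp_centeredChiSq w).integrable (by norm_num)
  have L2 : Integrable (fun x => S x ^ 2) (stdGaussianPi ι) := (memLp_centeredChiSq w).integrable_sq
  have idom : Integrable (fun x => 24 * (Real.exp (S x) + Real.exp (-S x))) (stdGaussianPi ι) :=
    (i1.add i2).const_mul 24
  have L4 : Integrable (fun x => S x ^ 4) (stdGaussianPi ι) := by
    refine idom.mono' (by fun_prop) (Filter.Eventually.of_forall fun x => ?_)
    rw [Real.norm_eq_abs, abs_of_nonneg (by positivity)]
    exact pow_four_le_exp_add_exp_neg _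
  have E1 : ∫ x, S x ∂(stdGaussianPi ι) = 0 := integral_centeredChiSq w
  have E2 : ∫ x, S x ^ 2 ∂(stdGaussianPi ι) = 1 / 8 := by
    rw [← variance_of_integral_eq_zero mS.aemeasurable E1, hS, variance_centeredChiSq, hw]
    norm_num
  have E4 : ∫ x, S x ^ 4 ∂(stdGaussianPi ι) ≤ 96 := by
    refine (integral_mono L4 idom fun x => pow_four_le_exp_add_exp_neg _).trans ?_
    rw [integral_const_mul, integral_add i1 i2]
    linarith
  have hmeas : MeasurableSet {x | 0 < S x} := measurableSet_lt measurable_const mS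
  have hindicator : ∫ x, Set.indicator {x | 0 < S x} 1 x ∂(stdGaussianPi ι)
      = (stdGaussianPi ι).real {x | 0 < S x} := integral_indicator_one hmeas
  have main : ∫ x, (1 / 32 * S x + 1 / 1024 * S x ^ 2 - 1 / 1048576 * S x ^ 4) ∂(stdGaussianPi ι) ≤
      ∫ x, 2 * Set.indicator {x | 0 < S x} 1 x ∂(stdGaussianPi ι) := by
    refine integral_mono (((L1.const_mul _).add (L2.const_mul _)).sub (L4.const_mul _))
      (((integrable_const (1 : ℝ)).indicator hmeas).const_mul 2) fun x => ?_
    have h := add_sq_sub_pow_four_le_indicator (S x / 32)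
    have e : Set.indicator (Set.Ioi 0) (1 : ℝ → ℝ) (S x / 32)
        = Set.indicator {x | 0 < S x} 1 x := by
      simp only [Set.indicator_apply, Set.mem_Ioi, Set.mem_ofPred_eq, Pi.one_apply]
      congr 1
      simp
    rw [e] at h
    refine le_trans (le_of_eq ?_) h
    ring
  rw [integral_const_mul, hindicator, integral_sub
    (f := fun x => 1 / 32 * S x + 1 / 1024 * S x ^ 2)
    ((L1.const_mul _).add (L2.const_mul _)) (L4.const_mul _),
    integral_add (L1.const_mul _) (L2.const_mul _), integral_const_mul, integral_const_mul,
    integral_const_mul, E1, E2] at main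
  linarith

lemma le_measureReal_centeredChiSq_pos {w : ι → ℝ} {s : ℝ} (hs : 0 < s)
    (hw : ∑ i, w i ^ 2 = s ^ 2) :
    1 / 65536 ≤ (stdGaussianPi ι).real {x | 0 < centeredChiSq w x} := by
  have h := le_measureReal_centeredChiSq_pos_of_eq (w := (1 / (4 * s)) • w) (by
    simp only [Pi.smul_apply, smul_eq_mul, mul_pow, ← Finset.mul_sum, hw]
    field_simp; norm_num)
  have e : ∀ x, 0 < centeredChiSq ((1 / (4 * s)) • w) x ↔ 0 < centeredChiSq w x := fun x => by
    rw [centeredChiSq_smul]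
    exact mul_pos_iff_of_pos_left (by positivity)
  simpa only [e] using h

lemma le_measureReal_centeredChiSq_neg {w : ι → ℝ} {s : ℝ} (hs : 0 < s)
    (hw : ∑ i, w i ^ 2 = s ^ 2) :
    1 / 65536 ≤ (stdGaussianPi ι).real {x | centeredChiSq w x < 0} := by
  have h := le_measureReal_centeredChiSq_pos (w := -w) hs (by simpa using hw)
  have e : ∀ x, 0 < centeredChiSq (-w) x ↔ centeredChiSq w x < 0 := fun x => by
    have := centeredChiSq_smul (-1) w x
    rw [neg_one_smul] at this
    rw [this]; simp
  simpa only [e] using h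

lemma measureReal_lt_abs_centeredChiSq_le {w : ι → ℝ} {s M : ℝ} (hs : 0 < s) (hM : 0 < M)
    (hw : ∑ i, w i ^ 2 = s ^ 2) :
    (stdGaussianPi ι).real {x | M * s < |centeredChiSq w x|} ≤ 2 / M ^ 2 := by
  have h := meas_ge_le_variance_div_sq (memLp_centeredChiSq w) (c := M * s) (by positivity)
  rw [integral_centeredChiSq, variance_centeredChiSq, hw] at h
  refine ENNReal.toReal_le_of_le_ofReal (by positivity) ((measure_mono ?_).trans (h.trans (le_of_eq ?_)))
  · intro x hx
    simpa using le_of_lt hx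
  · congr 1; field_simp

lemma measureReal_le_abs_centeredChiSq_le {w : ι → ℝ} {s m u L : ℝ} (hs : 0 < s) (hL : 0 < L)
    (hm : ∀ i, |w i| ≤ m) (hw : ∑ i, w i ^ 2 = s ^ 2)
    (hu : 3 * (s * √L + 4 * m * L) ≤ u) :
    (stdGaussianPi ι).real {x | u ≤ |centeredChiSq w x|} ≤ 2 * Real.exp (-L) := by
  obtain ⟨i0⟩ : Nonempty ι := by
    by_contra h
    rw [not_nonempty_iff] at h
    simp at hw
    exact (pow_pos hs 2).ne hw
  have hm0 : 0 ≤ m := (abs_nonneg _).trans (hm i0)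
  have hsq : 0 < √L := Real.sqrt_pos.2 hL
  have hsqL : √L * √L = L := Real.mul_self_sqrt hL.le
  set d := s / √L + 4 * m with hd
  have hd0 : 0 < d := by positivity
  have hdu : 3 * (L * d) ≤ u := by
    refine le_trans (le_of_eq ?_) hu
    have e : L * (s / √L) = s * √L := by
      rw [mul_div_assoc', div_eq_iff hsq.ne', mul_assoc, hsqL, mul_comm]
    rw [hd, mul_add, e]; ring
  have hsd : s / d ≤ √L := by
    rw [div_le_iff₀ hd0, hd]
    have : √L * (s / √L) = s := by field_simp
    nlinarith [mul_nonneg hsq.le hm0]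
  have hsd2 : (s / d) ^ 2 ≤ L := by
    rw [← Real.sq_sqrt hL.le]; gcongr
  have tail : ∀ c : ℝ, |c| = 1 / d →
      (stdGaussianPi ι).real {x | 3 * L ≤ c * centeredChiSq w x} ≤ Real.exp (-L) := by
    intro c hc
    have hcw : ∀ i, |(c • w) i| ≤ 1 / 4 := fun i => by
      rw [Pi.smul_apply, smul_eq_mul, abs_mul, hc, div_mul_eq_mul_div, one_mul, div_le_iff₀ hd0]
      have := hm i
      have : 0 < s / √L := by positivity
      linarith
    have hc2 : ∑ i, (c • w) i ^ 2 ≤ L := by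
      simp only [Pi.smul_apply, smul_eq_mul, mul_pow, ← Finset.mul_sum, hw]
      rw [← sq_abs c, hc]
      refine le_trans (le_of_eq ?_) hsd2
      ring
    have h := measure_ge_le_exp_mul_mgf (μ := stdGaussianPi ι) (X := centeredChiSq (c • w)) (t := 1)
      (3 * L) zero_le_one (by simpa using integrable_exp_centeredChiSq hcw)
    have h2 := integral_exp_centeredChiSq_le hcw
    simp only [mgf, one_mul] at h
    simp_rw [centeredChiSq_smul] at h h2
    refine h.trans ((mul_le_mul_of_nonneg_left h2 (Real.exp_pos _).le).trans ?_)
    rw [← Real.exp_add]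
    gcongr
    linarith
  have h1 := tail (1 / d) (abs_of_pos (by positivity))
  have h2 := tail (-(1 / d)) (by rw [abs_neg]; exact abs_of_pos (by positivity))
  have hsub : {x | u ≤ |centeredChiSq w x|} ⊆ {x | 3 * L ≤ 1 / d * centeredChiSq w x} ∪
      {x | 3 * L ≤ -(1 / d) * centeredChiSq w x} := by
    intro x hx
    have hx : u ≤ |centeredChiSq w x| := hx
    simp only [Set.mem_union, Set.mem_ofPred_eq]
    have e1 : ∀ y, 1 / d * y = y / d := fun y => by ring
    have e2 : ∀ y, -(1 / d) * y = -y / d := fun y => by ring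
    rw [e1, e2, le_div_iff₀ hd0, le_div_iff₀ hd0]
    rcases le_abs.1 hx with h | h
    · left; linarith
    · right; linarith
  have h3 := (measureReal_mono hsub (μ := stdGaussianPi ι)).trans (measureReal_union_le _ _)
  linarith

lemma centeredChiSq_rotate (w x y : ι → ℝ) (θ : ℝ) :
    centeredChiSq w (Real.cos θ • x + Real.sin θ • y) =
      (centeredChiSq w x + centeredChiSq w y) / 2
        + (centeredChiSq w x - centeredChiSq w y) / 2 * Real.cos (2 * θ)
        + (∑ i, w i * (x i * y i)) * Real.sin (2 * θ) := by
  have e : centeredChiSq w (Real.cos θ • x + Real.sin θ • y) =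
      Real.cos θ ^ 2 * centeredChiSq w x + Real.sin θ ^ 2 * centeredChiSq w y
        + (∑ i, w i * (x i * y i)) * (2 * Real.sin θ * Real.cos θ) := by
    simp only [centeredChiSq, Finset.mul_sum, Finset.sum_mul, ← Finset.sum_add_distrib,
      Pi.add_apply, Pi.smul_apply, smul_eq_mul]
    refine Finset.sum_congr rfl fun i _ => ?_
    linear_combination w i * Real.sin_sq_add_cos_sq θ
  rw [e, Real.sin_two_mul, Real.cos_two_mul, Real.sin_sq]
  ring

lemma abs_centeredChiSq_rotate_sub_le (w x y : ι → ℝ) {R : ℝ} (hx : |centeredChiSq w x| ≤ R)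
    (hy : |centeredChiSq w y| ≤ R)
    (hxy : |centeredChiSq w (Real.cos (Real.pi / 4) • x + Real.sin (Real.pi / 4) • y)| ≤ R)
    (θ φ : ℝ) :
    |centeredChiSq w (Real.cos θ • x + Real.sin θ • y)
      - centeredChiSq w (Real.cos φ • x + Real.sin φ • y)| ≤ 6 * R * |θ - φ| := by
  simp only [centeredChiSq_rotate] at hxy ⊢
  have e : 2 * (Real.pi / 4) = Real.pi / 2 := by ring
  rw [e, Real.cos_pi_div_two, Real.sin_pi_div_two] at hxy
  set A := centeredChiSq w x
  set B := centeredChiSq w y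
  set c := ∑ i, w i * (x i * y i)
  have hR : 0 ≤ R := (abs_nonneg _).trans hx
  rw [abs_le] at hx hy hxy
  have h1 : |(A - B) / 2| ≤ R := abs_le.2 ⟨by linarith, by linarith⟩
  have h2 : |c| ≤ 2 * R := abs_le.2 ⟨by linarith, by linarith⟩
  have h3 : |Real.cos (2 * θ) - Real.cos (2 * φ)| ≤ 2 * |θ - φ| := by
    refine (Real.abs_cos_sub_cos_le _ _).trans (le_of_eq ?_)
    rw [← mul_sub, abs_mul, abs_two]
  have h4 : |Real.sin (2 * θ) - Real.sin (2 * φ)| ≤ 2 * |θ - φ| := by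
    refine (Real.abs_sin_sub_sin_le _ _).trans (le_of_eq ?_)
    rw [← mul_sub, abs_mul, abs_two]
  calc _ = |(A - B) / 2 * (Real.cos (2 * θ) - Real.cos (2 * φ))
        + c * (Real.sin (2 * θ) - Real.sin (2 * φ))| := by congr 1; ring
    _ ≤ |(A - B) / 2| * |Real.cos (2 * θ) - Real.cos (2 * φ)|
        + |c| * |Real.sin (2 * θ) - Real.sin (2 * φ)| := by
      rw [← abs_mul, ← abs_mul]; exact abs_add_le _ _
    _ ≤ R * (2 * |θ - φ|) + 2 * R * (2 * |θ - φ|) := by gcongr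
    _ = _ := by ring

lemma exists_sign_change (f : ℕ → ℝ) (h0 : f 0 < 0) {K : ℕ} (hK : 0 < f K) :
    ∃ k < K, f k ≤ 0 ∧ 0 < f (k + 1) := by
  induction K with
  | zero => linarith
  | succ K ih =>
    by_cases h : 0 < f K
    · obtain ⟨k, hk, h⟩ := ih h
      exact ⟨k, by omega, h⟩
    · exact ⟨K, by omega, not_lt.1 h, hK⟩

/-- Small-ball lower bound: rotating a Gaussian pair from a point where the form is negative to one
where it is positive must cross a neighbourhood of zero at one of `K` angles. -/
lemma le_measureReal_abs_centeredChiSq_le {w : ι → ℝ} {s : ℝ} (hs : 0 < s)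
    (hw : ∑ i, w i ^ 2 = s ^ 2) {K : ℕ} (hK : 0 < K) :
    1 / 2 ^ 33 / K ≤ (stdGaussianPi ι).real {x | |centeredChiSq w x| ≤ 12 * 2 ^ 18 * s / K} := by
  set μ := stdGaussianPi ι with hμ
  set S := centeredChiSq w with hS
  have mS : Measurable S := measurable_centeredChiSq w
  have hK' : (0 : ℝ) < K := by exact_mod_cast hK
  set rot : ℝ → (ι → ℝ) × (ι → ℝ) → ι → ℝ :=
    fun θ p => Real.cos θ • p.1 + Real.sin θ • p.2 with hrot
  have mrot : ∀ θ, Measurable (rot θ) := fun θ => by simp only [hrot]; fun_prop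
  have law : ∀ θ {t : Set (ι → ℝ)}, MeasurableSet t → (μ.prod μ).real (rot θ ⁻¹' t) = μ.real t := by
    intro θ t ht
    rw [← map_measureReal_apply (mrot θ) ht]
    rw [map_rotation_stdGaussianPi θ]
  set R : ℝ := 2 ^ 18 * s with hR
  have hR0 : 0 < R := by positivity
  set big : Set (ι → ℝ) := {x | R < |S x|} with hbig
  have mbig : MeasurableSet big := measurableSet_lt measurable_const mS.abs
  have pbig : μ.real big ≤ 2 / (2 ^ 18) ^ 2 :=
    measureReal_lt_abs_centeredChiSq_le hs (by positivity) hw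
  set small : Set (ι → ℝ) := {x | |S x| ≤ 12 * 2 ^ 18 * s / K} with hsmall
  have msmall : MeasurableSet small := measurableSet_le mS.abs measurable_const
  set ang : ℕ → ℝ := fun k => k * (Real.pi / (2 * K)) with hang
  have cover : {x | S x < 0} ×ˢ {x | 0 < S x} ⊆
      (⋃ k ∈ Finset.range K, rot (ang k) ⁻¹' small) ∪
        (rot 0 ⁻¹' big ∪ (rot (Real.pi / 2) ⁻¹' big ∪ rot (Real.pi / 4) ⁻¹' big)) := by
    rintro ⟨x, y⟩ ⟨hx, hy⟩
    have hx : S x < 0 := hx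
    have hy : 0 < S y := hy
    have r0 : rot 0 (x, y) = x := by simp [hrot]
    have r1 : rot (Real.pi / 2) (x, y) = y := by simp [hrot]
    by_cases hb : (x, y) ∈ rot 0 ⁻¹' big ∪ (rot (Real.pi / 2) ⁻¹' big ∪ rot (Real.pi / 4) ⁻¹' big)
    · exact Or.inr hb
    left
    simp only [Set.mem_union, Set.mem_preimage, r0, r1, hbig, Set.mem_ofPred_eq, not_or,
      not_lt] at hb
    obtain ⟨bx, b_y, bxy⟩ := hb
    have ha0 : ang 0 = 0 := by simp [hang]
    have haK : ang K = Real.pi / 2 := by simp only [hang]; field_simp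
    obtain ⟨k, hk, hk1, hk2⟩ := exists_sign_change (fun k => S (rot (ang k) (x, y))) (K := K)
      (by simp only [ha0, r0]; exact hx) (by simp only [haK, r1]; exact hy)
    have hlip := abs_centeredChiSq_rotate_sub_le w x y bx b_y bxy (ang (k + 1)) (ang k)
    have hstep : |ang (k + 1) - ang k| ≤ 2 / K := by
      have e : ang (k + 1) - ang k = Real.pi / (2 * K) := by
        simp only [hang]; push_cast; ring
      rw [e, abs_of_nonneg (by positivity), div_le_div_iff₀ (by positivity) hK']
      nlinarith [Real.pi_le_four]
    have hfin : |S (rot (ang k) (x, y))| ≤ 12 * 2 ^ 18 * s / K := by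
      rw [abs_of_nonpos hk1]
      have h2 : 6 * R * |ang (k + 1) - ang k| ≤ 6 * R * (2 / K) := by gcongr
      have h3 : 6 * R * (2 / K) = 12 * 2 ^ 18 * s / K := by rw [hR]; ring
      have h4 := (le_abs_self _).trans (hlip.trans (h2.trans_eq h3))
      change S (rot (ang (k + 1)) (x, y)) - S (rot (ang k) (x, y)) ≤ _ at h4
      linarith
    simp only [Set.mem_iUnion, Finset.mem_range]
    exact ⟨k, hk, hfin⟩
  have h1 := (measureReal_mono cover (μ := μ.prod μ)).trans (measureReal_union_le _ _)
  have h2 : (μ.prod μ).real (⋃ k ∈ Finset.range K, rot (ang k) ⁻¹' small) ≤ K * μ.real small := by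
    refine (measureReal_biUnion_finset_le _ _).trans (le_of_eq ?_)
    simp [law _ msmall]
  have h3 : (μ.prod μ).real
      (rot 0 ⁻¹' big ∪ (rot (Real.pi / 2) ⁻¹' big ∪ rot (Real.pi / 4) ⁻¹' big))
      ≤ μ.real big + (μ.real big + μ.real big) := by
    refine (measureReal_union_le _ _).trans (add_le_add (law _ mbig).le ?_)
    exact (measureReal_union_le _ _).trans (add_le_add (law _ mbig).le (law _ mbig).le)
  rw [measureReal_prod_prod] at h1
  have h4 : (1 / 65536 : ℝ) * (1 / 65536) ≤ μ.real {x | S x < 0} * μ.real {x | 0 < S x} :=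
    mul_le_mul (le_measureReal_centeredChiSq_neg hs hw) (le_measureReal_centeredChiSq_pos hs hw)
      (by norm_num) measureReal_nonneg
  rw [div_le_iff₀ hK']
  norm_num at pbig h4 ⊢
  linarith

theorem one_sub_le_measureReal_abs_centeredChiSq_le {w : ι → ℝ} {s m δ : ℝ} (hs : 0 ≤ s)
    (hw : ∑ i, w i ^ 2 = s ^ 2) (hm0 : 0 ≤ m) (hm : ∀ i, |w i| ≤ m) (hδ0 : 0 < δ) (hδ1 : δ < 1) :
    1 - δ ≤ (stdGaussianPi ι).real
      {x | |centeredChiSq w x| ≤ 2 ^ 56 * (s * √(Real.log (1 / δ)) + m * Real.log (1 / δ))} := by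
  have hLε : 1 - δ ≤ Real.log (1 / δ) := by
    rw [one_div, Real.log_inv]; linarith [Real.log_le_sub_one_of_pos hδ0]
  have hexpL : Real.exp (-Real.log (1 / δ)) = δ := by
    rw [one_div, Real.log_inv, neg_neg, Real.exp_log hδ0]
  set L := Real.log (1 / δ) with hL
  have hL0 : 0 < L := by linarith
  rcases hs.eq_or_lt with rfl | hs
  · have hw0 : w = 0 := by
      ext i
      have := (Finset.sum_eq_zero_iff_of_nonneg (fun i _ => sq_nonneg (w i))).1
        (by rw [hw]; simp) i (Finset.mem_univ i)
      simpa using this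
    have e : {x | |centeredChiSq w x| ≤ 2 ^ 56 * (0 * √L + m * L)} = Set.univ := by
      refine Set.eq_univ_of_forall fun x => ?_
      have : centeredChiSq w x = 0 := by simp [centeredChiSq, hw0]
      simp only [Set.mem_ofPred_eq, this, abs_zero]
      positivity
    rw [e, probReal_univ]
    linarith
  by_cases hq : 1 - δ ≤ 1 / 2 ^ 33
  · have hε : 0 < 1 - δ := by linarith
    set r := 1 / 2 ^ 33 / (1 - δ) with hr
    have hr1 : 1 ≤ r := by rw [hr, le_div_iff₀ hε]; linarith
    have hK : 0 < ⌊r⌋₊ := Nat.floor_pos.2 hr1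
    have hKr : (⌊r⌋₊ : ℝ) ≤ r := Nat.floor_le (by linarith)
    have hKr2 : r ≤ 2 * ⌊r⌋₊ := by
      have := Nat.lt_floor_add_one r
      have : (1 : ℝ) ≤ ⌊r⌋₊ := by exact_mod_cast hK
      linarith
    have hK' : (0 : ℝ) < ⌊r⌋₊ := by exact_mod_cast hK
    have hrε : r * (1 - δ) = 1 / 2 ^ 33 := by rw [hr]; field_simp
    have h1 : 1 - δ ≤ 1 / 2 ^ 33 / ⌊r⌋₊ := by
      rw [le_div_iff₀ hK', ← hrε, mul_comm]; gcongr
    refine h1.trans ((le_measureReal_abs_centeredChiSq_le hs hw hK).trans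
      (measureReal_mono fun x hx => ?_))
    refine le_trans (show |centeredChiSq w x| ≤ _ from hx) ?_
    have hsq : 1 - δ ≤ √L := Real.le_sqrt_of_sq_le (by nlinarith)
    rw [div_le_iff₀ hK']
    have h2 : 1 ≤ 2 ^ 34 * (√L * ⌊r⌋₊) := by
      have : r * (1 - δ) ≤ 2 * ⌊r⌋₊ * √L := by gcongr
      rw [hrε] at this
      norm_num at this ⊢
      linarith
    have h3 : 0 ≤ m * L * ⌊r⌋₊ := by positivity
    have h4 := mul_le_mul_of_nonneg_left h2 hs.le
    norm_num at h2 h4 ⊢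
    nlinarith [mul_nonneg hs.le (mul_nonneg (Real.sqrt_nonneg L) hK'.le)]
  · have hLq : 1 / 2 ^ 33 ≤ L := by linarith
    have hQ : √(L * (1 + 2 ^ 33)) ≤ (1 + 2 ^ 33) * √L := by
      rw [Real.sqrt_mul hL0.le, mul_comm]
      gcongr
      rw [Real.sqrt_le_left (by norm_num)]
      norm_num
    have hu : 3 * (s * √(L * (1 + 2 ^ 33)) + 4 * m * (L * (1 + 2 ^ 33)))
        ≤ 2 ^ 56 * (s * √L + m * L) := by
      have h1 : s * √(L * (1 + 2 ^ 33)) ≤ s * ((1 + 2 ^ 33) * √L) := by gcongr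
      have h2 : 0 ≤ s * √L := by positivity
      have h3 : 0 ≤ m * L := by positivity
      norm_num at h1 ⊢
      nlinarith
    have h := measureReal_le_abs_centeredChiSq_le hs (L := L * (1 + 2 ^ 33)) (by positivity) hm hw hu
    have h2 : 2 * Real.exp (-(L * (1 + 2 ^ 33))) ≤ δ := by
      have h3 : Real.exp (-(L * (1 + 2 ^ 33))) ≤ Real.exp (-L + -Real.log 2) := by
        have := Real.log_two_lt_d9
        gcongr
        norm_num at hLq ⊢
        linarith
      rw [Real.exp_add, hexpL, Real.exp_neg (Real.log 2), Real.exp_log (by norm_num)] at h3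
      exact (mul_le_mul_of_nonneg_left h3 zero_le_two).trans_eq (by ring)
    have h4 : (stdGaussianPi ι).real {x | |centeredChiSq w x| ≤ 2 ^ 56 * (s * √L + m * L)}ᶜ ≤
        (stdGaussianPi ι).real {x | 2 ^ 56 * (s * √L + m * L) ≤ |centeredChiSq w x|} :=
      measureReal_mono fun x (hx : ¬ |centeredChiSq w x| ≤ _) => le_of_lt (not_le.1 hx)
    rw [probReal_compl_eq_one_sub
      (measurableSet_le (measurable_centeredChiSq w).abs measurable_const)] at h4
    linarith

end

lemma lpNorm_four_sq {k : ℕ} (v : Fin k → ℝ) : _root_.lpNorm 4 v ^ 2 = √(∑ i, v i ^ 4) := by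
  have e : ∀ i, |v i| ^ (4 : ℝ) = v i ^ 4 := fun i => by
    rw [show (4 : ℝ) = ((4 : ℕ) : ℝ) by norm_num, Real.rpow_natCast, Even.pow_abs (by decide)]
  have h0 : 0 ≤ ∑ i, v i ^ 4 := Finset.sum_nonneg fun i _ => by positivity
  simp only [_root_.lpNorm, e]
  rw [← Real.rpow_natCast, ← Real.rpow_mul h0, Real.sqrt_eq_rpow]
  norm_num

lemma abs_le_supNorm {k : ℕ} (v : Fin k → ℝ) (i : Fin k) : |v i| ≤ supNorm v :=
  le_ciSup (Set.finite_range fun i => |v i|).bddAbove i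

lemma iidGaussVec_inv_eq_map {N : ℕ} (k : ℕ) :
    iidGaussVec N k (N : NNReal)⁻¹ = (stdGaussianPi (Fin N × Fin k)).map
      (fun x i j => (√N)⁻¹ * x (i, j)) := by
  have h1 : gaussianReal 0 (N : NNReal)⁻¹ = (gaussianReal 0 1).map ((√N)⁻¹ * ·) := by
    rw [gaussianReal_map_const_mul, mul_zero, mul_one]
    congr 1
    ext
    simp
  have h2 : Measure.pi (fun _ : Fin N × Fin k => gaussianReal 0 (N : NNReal)⁻¹)
      = (stdGaussianPi (Fin N × Fin k)).map (fun x p => (√N)⁻¹ * x p) := by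
    rw [stdGaussianPi, Measure.pi_map_pi (f := fun _ x => (√N)⁻¹ * x) (fun _ => by fun_prop)]
    simp only [h1]
  have h3 := Measure.infinitePi_map_curry
    (fun (_ : Fin N) (_ : Fin k) => gaussianReal 0 (N : NNReal)⁻¹)
  simp only [Measure.infinitePi_eq_pi] at h3
  unfold iidGaussVec gaussVec
  rw [← h3, h2, Measure.map_map (MeasurableEquiv.measurable _) (by fun_prop)]
  rfl

/-- with `b_1, …, b_N` i.i.d. `N(0, (1/N) I_{n-1})` and `v ∈ ℝ^N` fixed, there
is a universal constant `C > 0` such that for any `δ ∈ (0,1)`, with probability at least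
`1 - δ`, `|∑_i (‖b_i‖² - (n-1)/N) v_i²| ≤ C (√(n log(1/δ))/N ‖v‖₄² + √n log(1/δ)/N ‖v‖_∞²)`. -/
theorem stmt_1 :
    ∃ C : ℝ, 0 < C ∧
      ∀ (N n : ℕ) (v : Fin N → ℝ) (δ : ℝ), 1 ≤ n → n ≤ N → 0 < δ → δ < 1 →
        ENNReal.ofReal (1 - δ) ≤
          (iidGaussVec N (n - 1) ((N : NNReal))⁻¹)
            {B | |∑ i, ((∑ j, (B i j) ^ 2) - ((n : ℝ) - 1) / N) * (v i) ^ 2|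
              ≤ C * (Real.sqrt (n * Real.log (1 / δ)) / N * lpNorm 4 v ^ 2
                  + Real.sqrt n * Real.log (1 / δ) / N * supNorm v ^ 2)} := by
  refine ⟨2 ^ 56, by norm_num, fun N n v δ hn hnN hδ0 hδ1 => ?_⟩
  have hN : (0 : ℝ) < N := by exact_mod_cast lt_of_lt_of_le hn hnN
  have hL0 : 0 < Real.log (1 / δ) := Real.log_pos (by rw [lt_div_iff₀ hδ0]; linarith)
  have hn1 : ((n - 1 : ℕ) : ℝ) = (n : ℝ) - 1 := by push_cast [Nat.cast_sub hn]; ring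
  have hv0 : 0 ≤ ∑ i, v i ^ 4 := Finset.sum_nonneg fun i _ => by positivity
  set w : Fin N × Fin (n - 1) → ℝ := fun p => v p.1 ^ 2 / N with hw
  set s : ℝ := √((n - 1 : ℕ) : ℝ) * √(∑ i, v i ^ 4) / N with hs
  have hws : ∑ p, w p ^ 2 = s ^ 2 := by
    rw [hs, div_pow, mul_pow, Real.sq_sqrt (Nat.cast_nonneg _), Real.sq_sqrt hv0,
      Fintype.sum_prod_type]
    simp only [hw, Finset.sum_const, Finset.card_univ, Fintype.card_fin, nsmul_eq_mul, div_pow]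
    rw [← Finset.mul_sum, ← Finset.sum_div, mul_div_assoc]
    congr 2
    exact Finset.sum_congr rfl fun i _ => by ring
  have hwm : ∀ p, |w p| ≤ supNorm v ^ 2 / N := fun p => by
    rw [hw, abs_div, abs_pow, Nat.abs_cast]
    gcongr
    exact abs_le_supNorm v p.1
  have key := one_sub_le_measureReal_abs_centeredChiSq_le (by positivity) hws (by positivity)
    hwm hδ0 hδ1
  rw [iidGaussVec_inv_eq_map]
  refine le_trans ?_ (Measure.le_map_apply (Measurable.aemeasurable (by fun_prop)) _)
  refine ((ENNReal.ofReal_le_ofReal key).trans_eq (ofReal_measureReal)).trans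
    (measure_mono fun x hx => ?_)
  have hx : |centeredChiSq w x| ≤ _ := hx
  simp only [Set.mem_preimage, Set.mem_ofPred_eq]
  have e : ∑ i, ((∑ j, ((√N)⁻¹ * x (i, j)) ^ 2) - ((n : ℝ) - 1) / N) * v i ^ 2
      = centeredChiSq w x := by
    rw [centeredChiSq, Fintype.sum_prod_type]
    refine Finset.sum_congr rfl fun i _ => ?_
    simp only [hw, mul_pow, inv_pow, Real.sq_sqrt hN.le]
    rw [← Finset.mul_sum, ← Finset.mul_sum, Finset.sum_sub_distrib]
    simp only [Finset.sum_const, Finset.card_univ, Fintype.card_fin, nsmul_eq_mul, mul_one, hn1]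
    ring
  rw [e]
  refine hx.trans ?_
  have hsqn : √((n - 1 : ℕ) : ℝ) ≤ √n := Real.sqrt_le_sqrt (by rw [hn1]; linarith)
  have hsqn1 : 1 ≤ √(n : ℝ) := Real.one_le_sqrt.2 (by exact_mod_cast hn)
  rw [lpNorm_four_sq, Real.sqrt_mul (Nat.cast_nonneg n)]
  gcongr 2 ^ 56 * (?_ + ?_)
  · calc s * √(Real.log (1 / δ)) ≤ √n * √(∑ i, v i ^ 4) / N * √(Real.log (1 / δ)) := by
          rw [hs]; gcongr
      _ = _ := by ring
  · calc supNorm v ^ 2 / N * Real.log (1 / δ)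
        = 1 * (supNorm v ^ 2 / N * Real.log (1 / δ)) := (one_mul _).symm
      _ ≤ √n * (supNorm v ^ 2 / N * Real.log (1 / δ)) := by gcongr
      _ = _ := by ring
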